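/- Let g(x) be an atom of ℕ₀[x]* that is not a prime element of ℕ₀[x]*, and let z(x) ∈ ℤ[x]\ℕ₀[x] be irreducible in ℤ[x] with g(x)·z(x) ∈ ℕ₀[x]*. Then for every prime element f(x) of ℕ₀[x]*, f(x) does not divide g(x)·z(x) in ℕ₀[x]* (f ∤_ℕ g·z). -/

import Mathlib

open Polynomial

/-- `f ∈ ℕ₀[x]`: all coefficients of `f` are nonnegative. -/
def NNPoly (f : Polynomial ℤ) : Prop := ∀ n, 0 ≤ f.coeff n

/-- `f ∈ ℕ₀[x]* = ℕ₀[x] \ {0}`. -/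
def NNStar (f : Polynomial ℤ) : Prop := NNPoly f ∧ f ≠ 0

/-- `f ∣_ℕ g`: divisibility in the monoid `ℕ₀[x]*`. -/
def DvdN (f g : Polynomial ℤ) : Prop := ∃ h, NNStar h ∧ g = f * h

/-- `f` is an atom of the monoid `ℕ₀[x]*`. -/
def IsAtomN (f : Polynomial ℤ) : Prop :=
  NNStar f ∧ f ≠ 1 ∧ ∀ g h, NNStar g → NNStar h → f = g * h → g = 1 ∨ h = 1

/-- `f` is a prime element of the monoid `ℕ₀[x]*`. -/
def IsPrimeN (f : Polynomial ℤ) : Prop :=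
  IsAtomN f ∧ ∀ g h, NNStar g → NNStar h → DvdN f (g * h) → DvdN f g ∨ DvdN f h

/-!
A prime element `f` of `ℕ₀[x]*` has only one term. Otherwise let `b = deg f`, `y = x ^ b`, and
choose `k < b` with `x ^ k` occurring in `f`. If `c * y` is the leading term of `f`, the polynomial
`r = (f - c * y) + c * x ^ (2 * b - k)` has no `y` term, but `f * (r - y)` has nonnegative
coefficients, hence so has `f * q` for `q = r + (1 - y + y ^ 2)`. Both `1 - y + y ^ 2` and `q`
become nonnegative when multiplied by `1 + y` or by `1 + y + y ^ 2`; as `q` is not in `ℕ₀[x]`,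
primality makes `f` divide both `1 + y` and `1 + y + y ^ 2`, hence `1`, which is absurd.

So `f` is `x` or a prime number. In particular `f` is prime in `ℤ[x]`, and divisibility by `f`
means the same in `ℕ₀[x]` as in `ℤ[x]`. If `f` divides `g * z`, then either it divides `g` and the
atom `g` is the prime element `f`, or it is associated to `z`; in that case `z = f`, because `g * f`
and `g * z` both lie in `ℕ₀[x]*`, and so `z` lies in `ℕ₀[x]`. Neither is possible.
-/

theorem nnPoly_C {c : ℤ} (hc : 0 ≤ c) : NNPoly (C c) := by
  intro n
  rw [coeff_C]
  split_ifs
  exacts [hc, le_rfl]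

theorem nnPoly_one : NNPoly 1 := by
  simpa only [map_one] using nnPoly_C zero_le_one

theorem nnPoly_X_pow (k : ℕ) : NNPoly (X ^ k) := by
  intro n
  rw [coeff_X_pow]
  split_ifs
  exacts [zero_le_one, le_rfl]

namespace NNPoly

variable {f g : ℤ[X]}

theorem add (hf : NNPoly f) (hg : NNPoly g) : NNPoly (f + g) := by
  intro n
  rw [coeff_add]
  exact add_nonneg (hf n) (hg n)

theorem mul (hf : NNPoly f) (hg : NNPoly g) : NNPoly (f * g) := by
  intro n
  rw [coeff_mul]
  exact Finset.sum_nonneg fun _ _ => mul_nonneg (hf _) (hg _)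

theorem eraseLead (hf : NNPoly f) : NNPoly f.eraseLead := by
  intro n
  rw [eraseLead_coeff]
  split_ifs
  exacts [le_rfl, hf n]

theorem sub_X_pow (hf : NNPoly f) {k : ℕ} (hk : f.coeff k ≠ 0) : NNPoly (f - X ^ k) := by
  intro n
  rw [coeff_sub, coeff_X_pow, sub_nonneg]
  split_ifs with hn
  · subst hn
    exact (hf n).lt_of_ne' hk
  · exact hf n

theorem eq_zero_of_neg (hf : NNPoly f) (hf' : NNPoly (-f)) : f = 0 := by
  ext n
  exact le_antisymm (neg_nonneg.mp (coeff_neg f n ▸ hf' n)) (hf n)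

theorem exists_mul_sub_X_pow_natDegree (hf : NNPoly f) {k : ℕ} (hk : f.coeff k ≠ 0)
    (hk' : k ≠ f.natDegree) :
    ∃ r, NNPoly r ∧ r.coeff f.natDegree = 0 ∧ NNPoly (f * (r - X ^ f.natDegree)) := by
  set b := f.natDegree with hb
  have hkb : k ≤ b := le_natDegree_of_ne_zero hk
  have hb0 : f.coeff b ≠ 0 := leadingCoeff_ne_zero.mpr fun h => hk (by rw [h, coeff_zero])
  have hlc : NNPoly (C f.leadingCoeff) := nnPoly_C (hf b)
  refine ⟨f.eraseLead + C f.leadingCoeff * X ^ (2 * b - k),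
    hf.eraseLead.add (hlc.mul (nnPoly_X_pow _)), ?_, ?_⟩
  · rw [coeff_add, hb, eraseLead_coeff_natDegree, coeff_C_mul_X_pow, if_neg (by omega), add_zero]
  · have hf_eq : f = f.eraseLead + C f.leadingCoeff * X ^ b :=
      f.eraseLead_add_C_mul_X_pow.symm
    have hsplit : (X : ℤ[X]) ^ b * X ^ b = X ^ k * X ^ (2 * b - k) := by
      rw [← pow_add, ← pow_add]
      congr 1
      omega
    have hfactor : f * (f.eraseLead + C f.leadingCoeff * X ^ (2 * b - k) - X ^ b) =
        (f - X ^ b) * f.eraseLead +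
          (f - X ^ k) * (C f.leadingCoeff * X ^ (2 * b - k)) := by
      linear_combination -X ^ b * hf_eq - C f.leadingCoeff * hsplit
    rw [hfactor]
    exact ((hf.sub_X_pow hb0).mul hf.eraseLead).add
      ((hf.sub_X_pow hk).mul (hlc.mul (nnPoly_X_pow _)))

end NNPoly

theorem nnStar_C {c : ℤ} (hc : 0 < c) : NNStar (C c) :=
  ⟨nnPoly_C hc.le, C_ne_zero.mpr hc.ne'⟩

theorem nnStar_X_pow (k : ℕ) : NNStar (X ^ k) :=
  ⟨nnPoly_X_pow k, pow_ne_zero k X_ne_zero⟩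

theorem NNPoly.nnStar_one_add {f : ℤ[X]} (hf : NNPoly f) : NNStar (1 + f) := by
  refine ⟨nnPoly_one.add hf, fun h => ?_⟩
  have hcoeff : (1 : ℤ) + f.coeff 0 = 0 := by
    simpa only [coeff_add, coeff_one_zero, coeff_zero] using congrArg (coeff · 0) h
  linarith [hf 0]

theorem NNStar.mul {f g : ℤ[X]} (hf : NNStar f) (hg : NNStar g) : NNStar (f * g) :=
  ⟨hf.1.mul hg.1, mul_ne_zero hf.2 hg.2⟩

theorem NNStar.eq_of_associated {f g : ℤ[X]} (hf : NNStar f) (hg : NNStar g)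
    (h : Associated f g) : f = g := by
  obtain ⟨u, rfl⟩ := h
  obtain ⟨r, hr, hru⟩ := Polynomial.isUnit_iff.mp u.isUnit
  rw [← hru] at hg ⊢
  rcases Int.isUnit_iff.mp hr with rfl | rfl
  · rw [C_1, mul_one]
  · rw [C_neg, C_1, mul_neg_one] at hg
    exact absurd (hf.1.eq_zero_of_neg hg.1) hf.2

theorem DvdN.dvd {f g : ℤ[X]} (h : DvdN f g) : f ∣ g := by
  obtain ⟨w, -, hw⟩ := h
  exact ⟨w, hw⟩

namespace IsAtomN

theorem eq_of_dvdN {f g : ℤ[X]} (hg : IsAtomN g) (hf : NNStar f) (hf1 : f ≠ 1)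
    (h : DvdN f g) : f = g := by
  obtain ⟨w, hw, hgw⟩ := h
  have hw1 : w = 1 := (hg.2.2 f w hf hw hgw).resolve_left hf1
  rw [hgw, hw1, mul_one]

theorem eq_one_of_X_pow {k : ℕ} (h : IsAtomN (X ^ k)) : k = 1 := by
  have eq_zero {j : ℕ} (hj : (X : ℤ[X]) ^ j = 1) : j = 0 := by
    simpa only [natDegree_X_pow, natDegree_one] using congrArg natDegree hj
  obtain ⟨-, hne, hsplit⟩ := h
  obtain _ | m := k
  · exact absurd (pow_zero X) hne
  · have hm : m = 0 := eq_zero <|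
      (hsplit _ _ (nnStar_X_pow m) (nnStar_X_pow 1) (pow_add X m 1)).resolve_right
        fun hX => one_ne_zero (eq_zero hX)
    rw [hm]

theorem natPrime_of_C {p : ℕ} (h : IsAtomN (C (p : ℤ))) : p.Prime := by
  obtain ⟨⟨-, hp0⟩, hp1, hsplit⟩ := h
  have hp0' : p ≠ 0 := by
    rintro rfl
    exact hp0 (by rw [Nat.cast_zero, C_0])
  have hp1' : p ≠ 1 := by
    rintro rfl
    exact hp1 (by rw [Nat.cast_one, C_1])
  have eq_one {a : ℕ} (ha : C (a : ℤ) = 1) : a = 1 := by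
    exact_mod_cast C_injective (ha.trans C_1.symm)
  refine Nat.prime_iff.mpr (irreducible_iff_prime.mp ⟨by rwa [Nat.isUnit_iff], ?_⟩)
  rintro a b rfl
  obtain ⟨ha, hb⟩ := mul_ne_zero_iff.mp hp0'
  rw [Nat.isUnit_iff, Nat.isUnit_iff]
  exact (hsplit (C (a : ℤ)) (C (b : ℤ)) (nnStar_C (by omega)) (nnStar_C (by omega))
    (by rw [Nat.cast_mul, C_mul])).imp eq_one eq_one

theorem eq_X_or_eq_C_natPrime {c : ℤ} {k : ℕ} (h : IsAtomN (C c * X ^ k)) :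
    C c * X ^ k = X ∨ ∃ p : ℕ, p.Prime ∧ C c * X ^ k = C (p : ℤ) := by
  have hc : 0 < c := by
    refine lt_of_le_of_ne' ?_ ?_
    · simpa only [coeff_C_mul_X_pow, if_true] using h.1.1 k
    · rintro rfl
      exact h.1.2 (by rw [C_0, zero_mul])
  rcases h.2.2 _ _ (nnStar_C hc) (nnStar_X_pow k) rfl with hc1 | hk
  · rw [hc1, one_mul] at h ⊢
    rw [h.eq_one_of_X_pow, pow_one]
    exact Or.inl rfl
  · rw [hk, mul_one] at h ⊢
    lift c to ℕ using hc.le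
    exact Or.inr ⟨c, h.natPrime_of_C, rfl⟩

end IsAtomN

namespace IsPrimeN

variable {f : ℤ[X]}

theorem dvdN_of_nnPoly_mul {z h : ℤ[X]} (hf : IsPrimeN f) (hz : ¬ NNPoly z)
    (hfz : NNPoly (f * z)) (hh : NNStar h) (hzh : NNPoly (z * h)) : DvdN f h := by
  have hf0 : f ≠ 0 := hf.1.1.2
  have hz0 : z ≠ 0 := by
    rintro rfl
    exact hz fun n => (coeff_zero n).ge
  have hdvd : DvdN f (f * z * h) := ⟨z * h, ⟨hzh, mul_ne_zero hz0 hh.2⟩, mul_assoc f z h⟩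
  refine (hf.2 (f * z) h ⟨hfz, mul_ne_zero hf0 hz0⟩ hh hdvd).resolve_left ?_
  rintro ⟨w, hw, hzw⟩
  exact hz (mul_left_cancel₀ hf0 hzw ▸ hw.1)

theorem dvdN_of_nnPoly_one_sub_add_sq_mul {h : ℤ[X]} (hf : IsPrimeN f) {k : ℕ}
    (hfk : f.coeff k ≠ 0) (hk : k ≠ f.natDegree) (hh : NNStar h)
    (hq : NNPoly ((1 - X ^ f.natDegree + (X ^ f.natDegree) ^ 2) * h)) : DvdN f h := by
  have hnn : NNPoly f := hf.1.1.1
  obtain ⟨r, hr, hr0, hfr⟩ := hnn.exists_mul_sub_X_pow_natDegree hfk hk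
  set y : ℤ[X] := X ^ f.natDegree with hy
  have hynn : NNPoly y := nnPoly_X_pow _
  have hz : ¬ NNPoly (r + (1 - y + y ^ 2)) := by
    intro hz
    have hb : f.natDegree ≠ 0 := by
      have := le_natDegree_of_ne_zero hfk
      omega
    have hcoeff : (r + (1 - y + y ^ 2)).coeff f.natDegree = -1 := by
      simp [hy, hr0, ← pow_mul, coeff_X_pow, coeff_one, hb]
    linarith [hz f.natDegree]
  have hfz : NNPoly (f * (r + (1 - y + y ^ 2))) := by
    have hexpand : f * (r + (1 - y + y ^ 2)) = f * (r - y) + f * (1 + y * y) := by ring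
    rw [hexpand]
    exact hfr.add (hnn.mul (nnPoly_one.add (hynn.mul hynn)))
  refine hf.dvdN_of_nnPoly_mul hz hfz hh ?_
  rw [add_mul]
  exact (hr.mul hh.1).add hq

theorem coeff_eq_zero_of_ne_natDegree (hf : IsPrimeN f) {k : ℕ} (hk : k ≠ f.natDegree) :
    f.coeff k = 0 := by
  by_contra hfk
  set y : ℤ[X] := X ^ f.natDegree
  have hynn : NNPoly y := nnPoly_X_pow _
  have hyy : NNPoly (y * y) := hynn.mul hynn
  have hdvd₁ : f ∣ 1 + y := by
    refine (hf.dvdN_of_nnPoly_one_sub_add_sq_mul hfk hk hynn.nnStar_one_add ?_).dvd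
    have hcube : (1 - y + y ^ 2) * (1 + y) = 1 + y * (y * y) := by ring
    rw [hcube]
    exact nnPoly_one.add (hynn.mul hyy)
  have hdvd₂ : f ∣ 1 + (y + y * y) := by
    refine (hf.dvdN_of_nnPoly_one_sub_add_sq_mul hfk hk (hynn.add hyy).nnStar_one_add ?_).dvd
    have hquartic : (1 - y + y ^ 2) * (1 + (y + y * y)) = 1 + (y * y + (y * y) * (y * y)) := by
      ring
    rw [hquartic]
    exact nnPoly_one.add (hyy.add (hyy.mul hyy))
  have hdvd_one : f ∣ 1 := by
    have hbezout : (1 : ℤ[X]) = 1 + (y + y * y) - y * (1 + y) := by ring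
    rw [hbezout]
    exact dvd_sub hdvd₂ (hdvd₁.mul_left y)
  have hdeg : f.natDegree = 0 := natDegree_eq_zero_of_isUnit (isUnit_of_dvd_one hdvd_one)
  have := le_natDegree_of_ne_zero hfk
  omega

theorem eq_X_or_eq_C_natPrime (hf : IsPrimeN f) :
    f = X ∨ ∃ p : ℕ, p.Prime ∧ f = C (p : ℤ) := by
  have hmonomial : f = C f.leadingCoeff * X ^ f.natDegree := by
    ext n
    rw [coeff_C_mul_X_pow]
    split_ifs with hn
    · rw [hn, leadingCoeff]
    · exact hf.coeff_eq_zero_of_ne_natDegree hn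
  have hatom : IsAtomN (C f.leadingCoeff * X ^ f.natDegree) := hmonomial ▸ hf.1
  simpa only [← hmonomial] using hatom.eq_X_or_eq_C_natPrime

theorem prime (hf : IsPrimeN f) : Prime f := by
  rcases hf.eq_X_or_eq_C_natPrime with rfl | ⟨p, hp, rfl⟩
  · exact prime_X
  · exact prime_C_iff.mpr (Nat.prime_iff_prime_int.mp hp)

theorem nnPoly_of_mul {w : ℤ[X]} (hf : IsPrimeN f) (h : NNPoly (f * w)) : NNPoly w := by
  intro n
  rcases hf.eq_X_or_eq_C_natPrime with rfl | ⟨p, hp, rfl⟩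
  · simpa only [coeff_X_mul] using h (n + 1)
  · have hpn : 0 ≤ (p : ℤ) * w.coeff n := by simpa only [coeff_C_mul] using h n
    exact nonneg_of_mul_nonneg_right hpn (by exact_mod_cast hp.pos)

theorem dvdN_of_dvd {g : ℤ[X]} (hf : IsPrimeN f) (hg : NNStar g) (h : f ∣ g) : DvdN f g := by
  obtain ⟨w, rfl⟩ := h
  exact ⟨w, ⟨hf.nnPoly_of_mul hg.1, right_ne_zero_of_mul hg.2⟩, rfl⟩

end IsPrimeN

/-- If `g` is an atom of `ℕ₀[x]*` which is not a prime element, and `z ∈ ℤ[x] \ ℕ₀[x]` is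
irreducible in `ℤ[x]` with `g·z ∈ ℕ₀[x]*`, then no prime element `f` of `ℕ₀[x]*`
divides `g·z` in `ℕ₀[x]*`. -/
theorem stmt6 (g z : Polynomial ℤ) (hg : IsAtomN g) (hgp : ¬ IsPrimeN g)
    (hz : ¬ NNPoly z) (hzirr : Irreducible z) (hgz : NNStar (g * z)) :
    ∀ f : Polynomial ℤ, IsPrimeN f → ¬ DvdN f (g * z) := by
  intro f hf hfgz
  have hfz : ¬ f ∣ z := by
    intro hdvd
    have hassoc : Associated f z := hf.prime.irreducible.associated_of_dvd hzirr hdvd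
    have hgf : g * f = g * z := (hg.1.mul hf.1.1).eq_of_associated hgz (hassoc.mul_left g)
    exact hz (mul_left_cancel₀ hg.1.2 hgf ▸ hf.1.1.1)
  have hfg : f ∣ g := (hf.prime.dvd_or_dvd hfgz.dvd).resolve_right hfz
  have heq : f = g := hg.eq_of_dvdN hf.1.1 hf.1.2.1 (hf.dvdN_of_dvd hg.1 hfg)
  exact hgp (heq ▸ hf)
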